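/- (Buss–Pitassi) There exist constants c > 1 and k ∈ ℕ such that for every n ≥ 1 and every m with m > c^{√(n·log n)}, the CNF formula ¬WPHP^m_n has a Regular Resolution refutation of length at most m^k. -/

import Mathlib

/-!
Read the refutation from the empty clause down, as a branching program. A state consists of the next
variable `x_{i,j}` to be examined and a set `I` of pigeons known to avoid every place before it. The
variables `x_{i,j}` with `i ∈ I` are queried. Once pigeon `i` is found in hole `j`, the program
passes to a smaller set `J ⊆ I \ {i}` and checks that the remaining pigeons of `J` avoid hole `j`
(otherwise a hole clause is falsified). If the sets stay nonempty, a pigeon clause is falsified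
after the last hole. All queries respect one linear order of the variables, hole first and pigeon
second, whence regularity.

The length is polynomial in `m`, `n` and the number of sets that occur, so what is needed is a small
family of sets in which `n` successive deletions can be survived. Split the pigeons along a
`(b + 1)`-ary tree of depth `D` and take all unions of siblings. Each deletion drops one sibling;
after `b` of them a single subtree is left, which is split anew. This survives `D * b` deletions
with at most `(D + 1) (b + 1)^D 2^(b + 1)` sets. With `b = ⌊log₂ m⌋` and `D = ⌊log_{b + 1} m⌋` that
number is polynomial in `m`. Moreover `n ≤ b * D`: otherwise `b < n`, so `log m` is at most both
`2 b` and `2 D log n`, whence `(log m)² ≤ 4 n log n`, contrary to `m > exp (2 √(n log n))`.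
-/

/-- A clause over variables of type `V`: a finite set of literals, where a literal
is a pair `(x, b)`; `(x, true)` is the literal `x` and `(x, false)` is `¬x`. -/
abbrev Clause (V : Type) := Finset (V × Bool)

/-- An assignment `α` satisfies a clause `C` if it makes some literal of `C` true. -/
def satClause {V : Type} (α : V → Bool) (C : Clause V) : Prop :=
  ∃ l ∈ C, α l.1 = l.2

/-- An assignment satisfies a CNF formula (a finite set of clauses) if it
satisfies every clause. -/
def satCNF {V : Type} (α : V → Bool) (f : Finset (Clause V)) : Prop :=
  ∀ C ∈ f, satClause α C

/-- A CNF formula is unsatisfiable if no assignment satisfies it. -/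
def Unsat {V : Type} (f : Finset (Clause V)) : Prop :=
  ¬ ∃ α : V → Bool, satCNF α f

/-- A Resolution refutation of the CNF formula `f`, given together with its
graph (dag) representation: a sequence of clauses `clause 0, ..., clause (size-1)`
where each clause is either a clause of `f` (a leaf, `step u = none`) or the
resolvent of two earlier clauses (`step u = some (x, a, b)`: the clause `u` is
obtained by resolving clause `a` (containing the literal `x`) and clause `b`
(containing the literal `¬x`) on the variable `x`); the last clause (the root)
is the empty clause. The length of the refutation is `size`. -/
structure ResolutionProof {V : Type} [DecidableEq V] (f : Finset (Clause V)) where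
  size : ℕ
  size_pos : 0 < size
  clause : Fin size → Clause V
  step : Fin size → Option (V × Fin size × Fin size)
  step_axiom : ∀ u, step u = none → clause u ∈ f
  step_lt : ∀ u x a b, step u = some (x, a, b) → (a : ℕ) < (u : ℕ) ∧ (b : ℕ) < (u : ℕ)
  step_res : ∀ u x a b, step u = some (x, a, b) →
    (x, true) ∈ clause a ∧ (x, false) ∈ clause b ∧
    clause u = (clause a).erase (x, true) ∪ (clause b).erase (x, false)
  last_empty : clause ⟨size - 1, Nat.sub_lt size_pos Nat.one_pos⟩ = ∅

namespace ResolutionProof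

variable {V : Type} [DecidableEq V] {f : Finset (Clause V)}

/-- The root of the dag: the last clause (the empty clause). -/
def root (P : ResolutionProof f) : Fin P.size :=
  ⟨P.size - 1, Nat.sub_lt P.size_pos Nat.one_pos⟩

/-- The variable labelling a (non-leaf) node: the variable resolved upon there. -/
def label (P : ResolutionProof f) (u : Fin P.size) : Option V :=
  (P.step u).map Prod.fst

/-- `P.Path u w p` : `p` is a directed path in the dag from `u` to `w`, recorded as
the list of (node, label of the outgoing edge taken) pairs: from a node labelled
`x`, the edge labelled `false` (i.e. 0) leads to the child containing the literal
`x`, and the edge labelled `true` (i.e. 1) leads to the child containing `¬x`. -/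
inductive Path (P : ResolutionProof f) :
    Fin P.size → Fin P.size → List (Fin P.size × Bool) → Prop
  | nil (u : Fin P.size) : Path P u u []
  | cons {u v w : Fin P.size} {x : V} {a b : Fin P.size} {bl : Bool}
      {rest : List (Fin P.size × Bool)}
      (hstep : P.step u = some (x, a, b))
      (hv : v = if bl then b else a)
      (hrest : Path P v w rest) : Path P u w ((u, bl) :: rest)

/-- A path `p` evaluates the variable `x` to `bl` if some node on `p` is labelled
`x`, and after the last node on `p` labelled `x` the path follows the outgoing
edge labelled `bl`. -/
def Evaluates (P : ResolutionProof f) (p : List (Fin P.size × Bool))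
    (x : V) (bl : Bool) : Prop :=
  ∃ i, ∃ hi : i < p.length,
    P.label (p.get ⟨i, hi⟩).1 = some x ∧ (p.get ⟨i, hi⟩).2 = bl ∧
    ∀ j, ∀ hj : j < p.length, i < j → P.label (p.get ⟨j, hj⟩).1 ≠ some x

/-- `Zeros(u)`: the set of variables evaluated to 0 by every path from the root to `u`. -/
def Zeros (P : ResolutionProof f) (u : Fin P.size) : Set V :=
  {x | ∀ p, P.Path P.root u p → P.Evaluates p x false}

/-- `Ones(u)`: the set of variables evaluated to 1 by every path from the root to `u`. -/
def Ones (P : ResolutionProof f) (u : Fin P.size) : Set V :=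
  {x | ∀ p, P.Path P.root u p → P.Evaluates p x true}

/-- A refutation is Regular if along every directed path in its dag each
variable is resolved upon at most once. -/
def Regular (P : ResolutionProof f) : Prop :=
  ∀ u w p, P.Path u w p → (p.map fun s => P.label s.1).Nodup

end ResolutionProof

/-- The pigeon clause `x_{i,1} ∨ ... ∨ x_{i,n}`: pigeon `i` maps to some hole. -/
def pigeonClause (n i : ℕ) : Clause (ℕ × ℕ) :=
  (Finset.Icc 1 n).image fun j => ((i, j), true)

/-- The hole clause `¬x_{i1,j} ∨ ¬x_{i2,j}`: pigeons `i1` and `i2` do not both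
map to hole `j`. -/
def holeClause (j i1 i2 : ℕ) : Clause (ℕ × ℕ) :=
  {((i1, j), false), ((i2, j), false)}

/-- The functionality clause `¬x_{i,j1} ∨ ¬x_{i,j2}`: pigeon `i` does not map to
both hole `j1` and hole `j2`. -/
def funcClause (i j1 j2 : ℕ) : Clause (ℕ × ℕ) :=
  {((i, j1), false), ((i, j2), false)}

/-- The onto clause `x_{1,j} ∨ ... ∨ x_{m,j}`: hole `j` is occupied. -/
def ontoClause (m j : ℕ) : Clause (ℕ × ℕ) :=
  (Finset.Icc 1 m).image fun i => ((i, j), true)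

/-- The CNF formula `¬WPHP^m_n`: the conjunction of all pigeon clauses and hole
clauses, over variables `x_{i,j}` for `1 ≤ i ≤ m`, `1 ≤ j ≤ n`. -/
def WPHPneg (m n : ℕ) : Finset (Clause (ℕ × ℕ)) :=
  ((Finset.Icc 1 m).image fun i => pigeonClause n i) ∪
  (((Finset.Icc 1 m ×ˢ Finset.Icc 1 m ×ˢ Finset.Icc 1 n).filter
      fun t => t.1 < t.2.1).image fun t => holeClause t.2.2 t.1 t.2.1)

/-- The CNF formula `¬FWPHP^m_n` (weak functional PHP): additionally each pigeon
goes to exactly one hole. -/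
def FWPHPneg (m n : ℕ) : Finset (Clause (ℕ × ℕ)) :=
  WPHPneg m n ∪
  (((Finset.Icc 1 m ×ˢ Finset.Icc 1 n ×ˢ Finset.Icc 1 n).filter
      fun t => t.2.1 < t.2.2).image fun t => funcClause t.1 t.2.1 t.2.2)

/-- The CNF formula `¬FOWPHP^m_n` (weak functional onto PHP): additionally every
hole is occupied. -/
def FOWPHPneg (m n : ℕ) : Finset (Clause (ℕ × ℕ)) :=
  FWPHPneg m n ∪ ((Finset.Icc 1 n).image fun j => ontoClause m j)

section OrderedDerivations

variable {V : Type} [DecidableEq V] {ι σ : Type*} [LinearOrder ι]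
  {f : Finset (Clause V)} {rk : V → ι}

/-- `C` is the resolvent of `A` and `B` on the variable `x`. -/
def IsResolvent (x : V) (A B C : Clause V) : Prop :=
  (x, true) ∈ A ∧ (x, false) ∈ B ∧ C = A.erase (x, true) ∪ B.erase (x, false)

/-- An ordered Resolution derivation from `f`, as an unordered set of clauses with levels: the level
of a resolvent is at most the rank of the variable resolved upon, and the levels of its two premises
are greater. The levels thus replace both the positions in a sequence and regularity. -/
def IsOrderedDerivation (f : Finset (Clause V)) (rk : V → ι) (T : Finset (ι × Clause V)) : Prop :=
  ∀ t ∈ T, t.2 ∈ f ∨ ∃ x, t.1 ≤ rk x ∧ ∃ a ∈ T, ∃ b ∈ T,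
    rk x < a.1 ∧ rk x < b.1 ∧ IsResolvent x a.2 b.2 t.2

lemma ResolutionProof.Path.exists_label_ge {P : ResolutionProof f} {level : Fin P.size → ι}
    (hP : ∀ u x a b, P.step u = some (x, a, b) → level u ≤ rk x ∧ rk x < level a ∧ rk x < level b)
    {u w : Fin P.size} {p : List (Fin P.size × Bool)} (hp : P.Path u w p) :
    ∀ s ∈ p, ∃ y, P.label s.1 = some y ∧ level u ≤ rk y := by
  induction hp with
  | nil => simp
  | @cons u v _ x a b bl rest hstep hv _ ih =>
    obtain ⟨hu, ha, hb⟩ := hP u x a b hstep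
    have huv : level u ≤ level v := by cases bl <;> subst hv <;> order
    rintro s (_ | ⟨_, hs⟩)
    · exact ⟨x, by simp [label, hstep], hu⟩
    · obtain ⟨y, hy, hvy⟩ := ih s hs
      exact ⟨y, hy, huv.trans hvy⟩

lemma ResolutionProof.regular_of_level {P : ResolutionProof f} {level : Fin P.size → ι}
    (hP : ∀ u x a b, P.step u = some (x, a, b) →
      level u ≤ rk x ∧ rk x < level a ∧ rk x < level b) : P.Regular := by
  intro u w p hp
  induction hp with
  | nil => simp
  | @cons u v w x a b bl rest hstep hv hrest ih =>
    obtain ⟨-, ha, hb⟩ := hP u x a b hstep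
    have hxv : rk x < level v := by cases bl <;> subst hv <;> assumption
    refine List.nodup_cons.mpr ⟨fun hmem => ?_, ih⟩
    obtain ⟨s, hs, hsu⟩ := List.mem_map.mp hmem
    obtain ⟨y, hy, hvy⟩ := hrest.exists_label_ge hP s hs
    have hlabel : P.label u = some x := by simp [label, hstep]
    have hxy : x = y := Option.some_injective _ (hlabel.symm.trans (hsu.symm.trans hy))
    exact (hxv.trans_le hvy).ne (congrArg rk hxy)

lemma exists_equiv_fin_antitone {α : Type*} (T : Finset α) (level : α → ι) :
    ∃ e : T ≃ Fin T.card, ∀ a b : T, level a < level b → e b < e a := by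
  let key : Fin T.card → ιᵒᵈ := fun i => OrderDual.toDual (level (T.equivFin.symm i))
  refine ⟨T.equivFin.trans (Tuple.sort key).symm, fun a b hab => ?_⟩
  by_contra! hle
  have := Tuple.monotone_sort key hle
  simp [key, hab.not_ge] at this

lemma IsOrderedDerivation.exists_regular {T : Finset (ι × Clause V)}
    (hT : IsOrderedDerivation f rk T) {l : ι} (hempty : (l, ∅) ∈ T) :
    ∃ P : ResolutionProof f, P.Regular ∧ P.size ≤ T.card := by
  obtain ⟨e, he⟩ := exists_equiv_fin_antitone T Prod.fst
  -- The sequence ends at the empty clause; whatever comes later in the enumeration is not needed.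
  let r : Fin T.card := e ⟨_, hempty⟩
  let node : Fin (r + 1) → ι × Clause V := fun u => e.symm ⟨u, by omega⟩
  have exists_index : ∀ u, ∀ t ∈ T, (node u).1 < t.1 → ∃ v, v.val < u.val ∧ node v = t := by
    intro u t ht hlt
    have hlt' : e ⟨t, ht⟩ < ⟨u, by omega⟩ := by
      simpa using he (e.symm ⟨u, by omega⟩) ⟨t, ht⟩ hlt
    exact ⟨⟨e ⟨t, ht⟩, by have := Fin.lt_def.mp hlt'; simp only at this; omega⟩,
      Fin.lt_def.mp hlt', by simp [node]⟩
  have exists_step : ∀ u, ∃ o : Option (V × Fin (r + 1) × Fin (r + 1)),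
      (o = none → (node u).2 ∈ f) ∧ ∀ x a b, o = some (x, a, b) →
        (a.val < u.val ∧ b.val < u.val) ∧ IsResolvent x (node a).2 (node b).2 (node u).2 ∧
        (node u).1 ≤ rk x ∧ rk x < (node a).1 ∧ rk x < (node b).1 := by
    intro u
    rcases hT (node u) (Subtype.prop _) with hf | ⟨x, hx, a, ha, b, hb, hxa, hxb, hres⟩
    · exact ⟨none, fun _ => hf, by simp⟩
    · obtain ⟨i, hi, rfl⟩ := exists_index u a ha (hx.trans_lt hxa)
      obtain ⟨j, hj, rfl⟩ := exists_index u b hb (hx.trans_lt hxb)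
      refine ⟨some (x, i, j), by simp, ?_⟩
      rintro _ _ _ ⟨⟩
      exact ⟨⟨hi, hj⟩, hres, hx, hxa, hxb⟩
  choose step step_none step_some using exists_step
  let P : ResolutionProof f :=
    { size := r + 1
      size_pos := r.val.succ_pos
      clause := fun u => (node u).2
      step := step
      step_axiom := step_none
      step_lt := fun u x a b h => (step_some u x a b h).1
      step_res := fun u x a b h => (step_some u x a b h).2.1
      last_empty := by simp [node, r] }
  exact ⟨P, P.regular_of_level (level := fun u => (node u).1)
    fun u x a b h => (step_some u x a b h).2.2, r.2⟩

/-- Elimination of weakening at one step: if a premise lacks the literal resolved upon, it already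
subsumes the conclusion, and otherwise the resolvent is added. -/
lemma IsOrderedDerivation.exists_superset_resolve {T : Finset (ι × Clause V)}
    (hT : IsOrderedDerivation f rk T) {x : V} {l : ι} {C : Clause V} {a b : ι × Clause V}
    (hl : l ≤ rk x) (ha : a ∈ T) (hb : b ∈ T) (hxa : rk x < a.1) (hxb : rk x < b.1)
    (haC : a.2 ⊆ insert (x, true) C) (hbC : b.2 ⊆ insert (x, false) C) :
    ∃ T', T ⊆ T' ∧ IsOrderedDerivation f rk T' ∧ T'.card ≤ T.card + 1 ∧
      ∃ t ∈ T', l ≤ t.1 ∧ t.2 ⊆ C := by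
  by_cases hxA : (x, true) ∈ a.2
  · by_cases hxB : (x, false) ∈ b.2
    · let R := a.2.erase (x, true) ∪ b.2.erase (x, false)
      have hsub : T ⊆ insert (l, R) T := Finset.subset_insert _ _
      refine ⟨insert (l, R) T, hsub, fun t ht => ?_, Finset.card_insert_le _ _,
        (l, R), Finset.mem_insert_self _ _, le_rfl,
        Finset.union_subset (Finset.subset_insert_iff.mp haC) (Finset.subset_insert_iff.mp hbC)⟩
      rcases Finset.mem_insert.mp ht with rfl | ht
      · exact .inr ⟨x, hl, a, hsub ha, b, hsub hb, hxa, hxb, hxA, hxB, rfl⟩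
      · refine (hT t ht).imp_right ?_
        rintro ⟨y, hy, c, hc, d, hd, h⟩
        exact ⟨y, hy, c, hsub hc, d, hsub hd, h⟩
    · exact ⟨T, subset_rfl, hT, T.card.le_succ, b, hb, hl.trans hxb.le,
        (Finset.subset_insert_iff_of_notMem hxB).mp hbC⟩
  · exact ⟨T, subset_rfl, hT, T.card.le_succ, a, ha, hl.trans hxa.le,
      (Finset.subset_insert_iff_of_notMem hxA).mp haC⟩

/-- `C` is subsumed by a clause of `f`, or by the clause of a node of `S` whose level is greater
than `l`. -/
def SubsumedAbove (f : Finset (Clause V)) (level : σ → ι) (clause : σ → Clause V) (S : Finset σ)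
    (l : ι) (C : Clause V) : Prop :=
  (∃ D ∈ f, D ⊆ C) ∨ ∃ v ∈ S, l < level v ∧ clause v ⊆ C

/-- An ordered Resolution derivation from `f` in which weakening is free: each node of `S` either
weakens a clause of `f` or of a node of greater level, or resolves two such weakenings. Read as a
branching program, a node of the second kind queries `x`. -/
def IsOrderedWeakDerivation (f : Finset (Clause V)) (rk : V → ι) (level : σ → ι)
    (clause : σ → Clause V) (S : Finset σ) : Prop :=
  ∀ s ∈ S, SubsumedAbove f level clause S (level s) (clause s) ∨
    ∃ x, level s ≤ rk x ∧
      SubsumedAbove f level clause S (rk x) (insert (x, true) (clause s)) ∧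
      SubsumedAbove f level clause S (rk x) (insert (x, false) (clause s))

variable {level : σ → ι} {clause : σ → Clause V} {S : Finset σ}

omit [DecidableEq V] in
lemma SubsumedAbove.of_insert [DecidableEq σ] {s : σ} {l : ι} {C : Clause V} (hs : level s ≤ l)
    (h : SubsumedAbove f level clause (insert s S) l C) : SubsumedAbove f level clause S l C := by
  refine h.imp_right ?_
  rintro ⟨v, hv, hlv, hC⟩
  exact ⟨v, Finset.mem_of_mem_insert_of_ne hv (by rintro rfl; exact hlv.not_ge hs), hlv, hC⟩

lemma IsOrderedWeakDerivation.of_insert [DecidableEq σ] {s : σ} (hs : ∀ v ∈ S, level s ≤ level v)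
    (h : IsOrderedWeakDerivation f rk level clause (insert s S)) :
    IsOrderedWeakDerivation f rk level clause S := by
  intro v hv
  rcases h v (Finset.mem_insert_of_mem hv) with hsub | ⟨x, hx, htrue, hfalse⟩
  · exact .inl (hsub.of_insert (hs v hv))
  · have hsx := (hs v hv).trans hx
    exact .inr ⟨x, hx, htrue.of_insert hsx, hfalse.of_insert hsx⟩

lemma IsOrderedWeakDerivation.exists_isOrderedDerivation
    (h : IsOrderedWeakDerivation f rk level clause S) :
    ∃ T : Finset (WithTop ι × Clause V), IsOrderedDerivation f (fun x => (rk x : WithTop ι)) T ∧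
      T.card ≤ f.card + S.card ∧ (∀ C ∈ f, (⊤, C) ∈ T) ∧
      ∀ s ∈ S, ∃ t ∈ T, (level s : WithTop ι) ≤ t.1 ∧ t.2 ⊆ clause s := by
  classical
  induction S using Finset.induction_on_min_value level with
  | empty =>
    refine ⟨f.image (⊤, ·), ?_, by simpa using Finset.card_image_le, by simp, by simp⟩
    simp only [IsOrderedDerivation, Finset.forall_mem_image]
    exact fun C hC => .inl hC
  | insert s S hs hmin ih =>
    obtain ⟨T, hT, hcard, hfT, hST⟩ := ih (h.of_insert hmin)
    have exists_mem : ∀ {l C}, level s ≤ l → SubsumedAbove f level clause (insert s S) l C →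
        ∃ t ∈ T, (l : WithTop ι) < t.1 ∧ t.2 ⊆ C := by
      intro l C hl hC
      rcases hC.of_insert hl with ⟨D, hD, hDC⟩ | ⟨v, hv, hlv, hvC⟩
      · exact ⟨_, hfT D hD, WithTop.coe_lt_top l, hDC⟩
      · obtain ⟨t, ht, hvt, htv⟩ := hST v hv
        exact ⟨t, ht, (WithTop.coe_lt_coe.mpr hlv).trans_le hvt, htv.trans hvC⟩
    obtain ⟨T', hTT', hT', hcard', hs'⟩ : ∃ T', T ⊆ T' ∧
        IsOrderedDerivation f (fun x => (rk x : WithTop ι)) T' ∧ T'.card ≤ T.card + 1 ∧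
        ∃ t ∈ T', (level s : WithTop ι) ≤ t.1 ∧ t.2 ⊆ clause s := by
      rcases h s (Finset.mem_insert_self s S) with hsub | ⟨x, hx, htrue, hfalse⟩
      · obtain ⟨t, ht, hst, hts⟩ := exists_mem le_rfl hsub
        exact ⟨T, subset_rfl, hT, T.card.le_succ, t, ht, hst.le, hts⟩
      · obtain ⟨a, ha, hxa, hA⟩ := exists_mem hx htrue
        obtain ⟨b, hb, hxb, hB⟩ := exists_mem hx hfalse
        exact hT.exists_superset_resolve (WithTop.coe_le_coe.mpr hx) ha hb hxa hxb hA hB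
    refine ⟨T', hT', ?_, fun C hC => hTT' (hfT C hC), ?_⟩
    · rw [Finset.card_insert_of_notMem hs]
      omega
    · rw [Finset.forall_mem_insert]
      refine ⟨hs', fun v hv => ?_⟩
      obtain ⟨t, ht, htv⟩ := hST v hv
      exact ⟨t, hTT' ht, htv⟩

theorem IsOrderedWeakDerivation.exists_regular
    (h : IsOrderedWeakDerivation f rk level clause S) {s : σ} (hs : s ∈ S) (hempty : clause s = ∅) :
    ∃ P : ResolutionProof f, P.Regular ∧ P.size ≤ f.card + S.card := by
  obtain ⟨T, hT, hcard, -, hST⟩ := h.exists_isOrderedDerivation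
  obtain ⟨⟨l, C⟩, ht, -, hC⟩ := hST s hs
  obtain rfl : C = ∅ := Finset.subset_empty.mp (hempty ▸ hC)
  obtain ⟨P, hP, hsize⟩ := hT.exists_regular ht
  exact ⟨P, hP, hsize.trans hcard⟩

end OrderedDerivations

section DeletionGame

variable {α : Type*}

/-- `Survives 𝓢 k I`: from `I` one can survive `k` rounds of the game in which an adversary picks an
element of the current set, which must then be replaced by a nonempty subset from the family `𝓢`
that avoids the element. -/
def Survives (𝓢 : Finset (Finset α)) : ℕ → Finset α → Prop
  | 0, I => I.Nonempty
  | k + 1, I => I.Nonempty ∧ ∀ i ∈ I, ∃ J ∈ 𝓢, J ⊆ I ∧ i ∉ J ∧ Survives 𝓢 k J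

namespace Survives

variable {𝓢 𝓣 : Finset (Finset α)} {k l : ℕ} {I : Finset α}

lemma nonempty (h : Survives 𝓢 k I) : I.Nonempty := by
  cases k with
  | zero => exact h
  | succ k => exact h.1

lemma mono (h𝓢 : 𝓢 ⊆ 𝓣) (h : Survives 𝓢 k I) : Survives 𝓣 k I := by
  induction k generalizing I with
  | zero => exact h
  | succ k ih =>
    refine ⟨h.1, fun i hi => ?_⟩
    obtain ⟨J, hJ, hJI, hiJ, hkJ⟩ := h.2 i hi
    exact ⟨J, h𝓢 hJ, hJI, hiJ, ih hkJ⟩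

lemma anti (hkl : k ≤ l) (h : Survives 𝓢 l I) : Survives 𝓢 k I := by
  induction l generalizing k I with
  | zero => rwa [Nat.le_zero.mp hkl]
  | succ l ih =>
    cases k with
    | zero => exact h.1
    | succ k =>
      refine ⟨h.1, fun i hi => ?_⟩
      obtain ⟨J, hJ, hJI, hiJ, hlJ⟩ := h.2 i hi
      exact ⟨J, hJ, hJI, hiJ, ih (Nat.le_of_succ_le_succ hkl) hlJ⟩

/-- Each round costs at most the one part that contains the deleted element. -/
lemma sup_id [DecidableEq α] {𝓟 : Finset (Finset α)} {r : ℕ} (h𝓟 : 𝓟.SupIndep id)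
    (hk : ∀ J ∈ 𝓟, Survives 𝓢 k J) (hmem : ∀ 𝓠 ⊆ 𝓟, 𝓠.sup id ∈ 𝓢) (hcard : 𝓟.card = r + 1) :
    Survives 𝓢 (k + r) (𝓟.sup id) := by
  induction r generalizing 𝓟 with
  | zero =>
    obtain ⟨J, rfl⟩ := Finset.card_eq_one.mp hcard
    simpa using hk J
  | succ r ih =>
    refine ⟨?_, fun i hi => ?_⟩
    · obtain ⟨J, hJ⟩ := Finset.card_pos.mp (show 0 < 𝓟.card by omega)
      exact (hk J hJ).nonempty.mono (Finset.le_sup (f := id) hJ)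
    · obtain ⟨J, hJ, hiJ⟩ := Finset.mem_sup.mp hi
      have hsub : 𝓟.erase J ⊆ 𝓟 := Finset.erase_subset J 𝓟
      have hdisj : Disjoint J ((𝓟.erase J).sup id) := h𝓟 hsub hJ (Finset.notMem_erase J 𝓟)
      exact ⟨(𝓟.erase J).sup id, hmem _ hsub, Finset.sup_mono hsub,
        Finset.disjoint_left.mp hdisj hiJ,
        ih (h𝓟.subset hsub) (fun L hL => hk L (hsub hL)) (fun 𝓠 h𝓠 => hmem 𝓠 (h𝓠.trans hsub))
          (by rw [Finset.card_erase_of_mem hJ, hcard, Nat.add_sub_cancel])⟩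

end Survives

lemma exists_finpartition_card_parts [DecidableEq α] {b q : ℕ} {I : Finset α} (hq : 0 < q)
    (hI : (b + 1) * q ≤ I.card) :
    ∃ P : Finpartition I, P.parts.card = b + 1 ∧ ∀ J ∈ P.parts, q ≤ J.card := by
  obtain ⟨P, hP, hcard⟩ := Finpartition.exists_equipartition_card_eq I b.succ_ne_zero
    ((Nat.le_mul_of_pos_right _ hq).trans hI)
  refine ⟨P, hcard, fun J hJ => le_trans ?_ (hP.average_le_card_part hJ)⟩
  rw [hcard, Nat.le_div_iff_mul_le b.succ_pos, mul_comm]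
  exact hI

/-- The family consists of the unions of siblings at all levels of a `(b + 1)`-ary tree of depth
`D`. -/
theorem exists_family_survives (b D : ℕ) (I : Finset α) (hI : (b + 1) ^ D ≤ I.card) :
    ∃ 𝓢 : Finset (Finset α), I ∈ 𝓢 ∧ (∀ J ∈ 𝓢, J ⊆ I) ∧
      𝓢.card ≤ (D + 1) * (b + 1) ^ D * 2 ^ (b + 1) ∧ Survives 𝓢 (D * b) I := by
  classical
  induction D generalizing I with
  | zero =>
    refine ⟨{I}, by simp, by simp, by simpa using Nat.one_le_two_pow, ?_⟩
    simpa [Survives, Finset.card_pos] using hI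
  | succ D ih =>
    obtain ⟨P, hPcard, hPpart⟩ := exists_finpartition_card_parts (q := (b + 1) ^ D)
      (by positivity) (by rwa [← pow_succ'])
    choose! F _ hsub hcard hsurv using fun J hJ => ih J (hPpart J hJ)
    let unions := P.parts.powerset.image fun 𝓠 => 𝓠.sup id
    have mem_unions : ∀ 𝓠 ⊆ P.parts, 𝓠.sup id ∈ unions := fun 𝓠 h𝓠 =>
      Finset.mem_image_of_mem _ (Finset.mem_powerset.mpr h𝓠)
    have card_unions : unions.card ≤ 2 ^ (b + 1) := by
      simpa [hPcard] using Finset.card_image_le (s := P.parts.powerset) (f := fun 𝓠 => 𝓠.sup id)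
    have card_subfamilies :
        (P.parts.biUnion F).card ≤ (b + 1) * ((D + 1) * (b + 1) ^ D * 2 ^ (b + 1)) := by
      simpa only [hPcard] using Finset.card_biUnion_le_card_mul _ _ _ hcard
    refine ⟨unions ∪ P.parts.biUnion F, ?_, ?_, ?_, ?_⟩
    · exact Finset.mem_union_left _ (P.sup_parts ▸ mem_unions P.parts subset_rfl)
    · intro J hJ
      simp only [unions, Finset.mem_union, Finset.mem_image, Finset.mem_powerset,
        Finset.mem_biUnion] at hJ
      rcases hJ with ⟨𝓠, h𝓠, rfl⟩ | ⟨L, hL, hJ⟩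
      · exact (Finset.sup_mono h𝓠).trans P.sup_parts.le
      · exact (hsub L hL J hJ).trans (P.le hL)
    · calc (unions ∪ P.parts.biUnion F).card
          ≤ 2 ^ (b + 1) + (b + 1) * ((D + 1) * (b + 1) ^ D * 2 ^ (b + 1)) :=
            (Finset.card_union_le _ _).trans (add_le_add card_unions card_subfamilies)
        _ ≤ (b + 1) ^ (D + 1) * 2 ^ (b + 1) + (b + 1) * ((D + 1) * (b + 1) ^ D * 2 ^ (b + 1)) := by
            gcongr
            exact Nat.le_mul_of_pos_left _ (by positivity)
        _ = (D + 1 + 1) * (b + 1) ^ (D + 1) * 2 ^ (b + 1) := by ring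
    · have hsup : Survives (unions ∪ P.parts.biUnion F) (D * b + b) (P.parts.sup id) :=
        Survives.sup_id P.supIndep
          (fun J hJ => (hsurv J hJ).mono
            ((Finset.subset_biUnion_of_mem F hJ).trans Finset.subset_union_right))
          (fun 𝓠 h𝓠 => Finset.mem_union_left _ (mem_unions 𝓠 h𝓠)) hPcard
      rwa [P.sup_parts, ← Nat.succ_mul] at hsup

end DeletionGame

section PigeonholeProgram

/-- Variables are queried hole by hole and, for each hole, in increasing order of the pigeon. -/
def queryRank (v : ℕ × ℕ) : ℕ ×ₗ ℕ := toLex (v.2, v.1)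

/-- The clause with the literals `x_{p,q}` for `p ∈ I` whose rank is less than `r`: it says
that some pigeon of `I` sits in one of the places before `r`. -/
def occupiedClause (I : Finset ℕ) (r : ℕ ×ₗ ℕ) : Clause (ℕ × ℕ) :=
  ((I ×ˢ Finset.Icc 1 (ofLex r).1).filter (queryRank · < r)).image (·, true)

lemma queryRank_lt {p q i j : ℕ} : queryRank (p, q) < toLex (j, i) ↔ q < j ∨ q = j ∧ p < i :=
  Prod.Lex.toLex_lt_toLex

lemma mem_occupiedClause {I : Finset ℕ} {i j p q : ℕ} {b : Bool} :
    ((p, q), b) ∈ occupiedClause I (toLex (j, i)) ↔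
      b = true ∧ p ∈ I ∧ 1 ≤ q ∧ (q < j ∨ q = j ∧ p < i) := by
  simp only [occupiedClause, Finset.mem_image, Finset.mem_filter, Finset.mem_product,
    Finset.mem_Icc, Prod.mk.injEq, Prod.exists, queryRank_lt, ofLex_toLex]
  constructor
  · rintro ⟨p, q, ⟨⟨hp, hq, -⟩, hlt⟩, ⟨rfl, rfl⟩, rfl⟩
    exact ⟨rfl, hp, hq, hlt⟩
  · rintro ⟨rfl, hp, hq, hlt⟩
    exact ⟨p, q, ⟨⟨hp, hq, by omega⟩, hlt⟩, ⟨rfl, rfl⟩, rfl⟩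

/-- A state `(j, i, I, o)` of the branching program: pigeon `i` is the next one to be looked for in
hole `j`, the pigeons of `I` are known to avoid all places already examined, and `o` is the pigeon
found in hole `j`, if any. -/
abbrev PigeonState := ℕ × ℕ × Finset ℕ × Option ℕ

namespace PigeonState

/-- The rank of the variable that is examined next. -/
def level : PigeonState → ℕ ×ₗ ℕ
  | (j, i, _, _) => toLex (j, i)

/-- The negation of what is known at a state. -/
def clause : PigeonState → Clause (ℕ × ℕ)
  | (j, i, I, o) => occupiedClause I (toLex (j, i)) ∪ o.toFinset.image fun p => ((p, j), false)

/-- At a state with `n` holes, `I` can survive one round for each hole that is still to be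
occupied. -/
def IsAdmissible (𝓢 : Finset (Finset ℕ)) (n : ℕ) : PigeonState → Prop
  | (j, _, I, none) => Survives 𝓢 (n + 1 - j) I
  | (j, i, I, some p) => j ≤ n ∧ p < i ∧ p ∉ I ∧ Survives 𝓢 (n - j) I

open scoped Classical in
/-- The states used for `m` pigeons and `n` holes. At hole number `n + 1` a pigeon clause is
falsified, and at pigeon number `m + 1` the program passes to the next hole. -/
noncomputable def states (𝓢 : Finset (Finset ℕ)) (m n : ℕ) : Finset PigeonState :=
  (Finset.Icc 1 (n + 1) ×ˢ Finset.Icc 1 (m + 1) ×ˢ 𝓢 ×ˢ (Finset.Icc 1 m).insertNone).filter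
    (IsAdmissible 𝓢 n)

variable {𝓢 : Finset (Finset ℕ)} {m n j i p : ℕ} {I : Finset ℕ} {o : Option ℕ}

lemma mem_states : (j, i, I, o) ∈ states 𝓢 m n ↔
    (1 ≤ j ∧ j ≤ n + 1) ∧ (1 ≤ i ∧ i ≤ m + 1) ∧ I ∈ 𝓢 ∧ (∀ p ∈ o, 1 ≤ p ∧ p ≤ m) ∧
      IsAdmissible 𝓢 n (j, i, I, o) := by
  simp [states, and_assoc]

lemma card_states_le :
    (states 𝓢 m n).card ≤ (n + 1) * ((m + 1) * (𝓢.card * (m + 1))) := by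
  classical
  simpa [states] using Finset.card_filter_le
    (Finset.Icc 1 (n + 1) ×ˢ Finset.Icc 1 (m + 1) ×ˢ 𝓢 ×ˢ (Finset.Icc 1 m).insertNone)
    (IsAdmissible 𝓢 n)

lemma queryRank_lt_level_succ : queryRank (i, j) < level (j, i + 1, I, o) :=
  Prod.Lex.toLex_lt_toLex.mpr (.inr ⟨rfl, i.lt_succ_self⟩)

lemma mem_clause {q r : ℕ} {b : Bool} : ((r, q), b) ∈ clause (j, i, I, o) ↔
    (b = true ∧ r ∈ I ∧ 1 ≤ q ∧ (q < j ∨ q = j ∧ r < i)) ∨ (b = false ∧ r ∈ o ∧ q = j) := by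
  simp only [clause, Finset.mem_union, mem_occupiedClause, Finset.mem_image, Option.mem_toFinset,
    Prod.mk.injEq]
  aesop

lemma succ_mem_states (hs : (j, i, I, o) ∈ states 𝓢 m n) (hi : i ≤ m) :
    (j, i + 1, I, o) ∈ states 𝓢 m n := by
  obtain ⟨hj, -, hI, ho, hadm⟩ := mem_states.mp hs
  exact mem_states.mpr ⟨hj, by omega, hI, ho, by cases o <;> grind [IsAdmissible]⟩

lemma IsAdmissible.survives (h : IsAdmissible 𝓢 n (j, i, I, o)) : Survives 𝓢 (n - j) I := by
  cases o with
  | none => exact Survives.anti (by omega) h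
  | some p => exact h.2.2.2

/-- Subsumption by a clause of `¬WPHP` or by a program state of level greater than `l`. -/
abbrev Subsumed (𝓢 : Finset (Finset ℕ)) (m n : ℕ) (l : ℕ ×ₗ ℕ) (C : Clause (ℕ × ℕ)) : Prop :=
  SubsumedAbove (WPHPneg m n) level clause (states 𝓢 m n) l C

lemma subsumed_of_notMem (hs : (j, i, I, o) ∈ states 𝓢 m n) (hi : i ≤ m) (hiI : i ∉ I) :
    Subsumed 𝓢 m n (level (j, i, I, o)) (clause (j, i, I, o)) := by
  refine .inr ⟨_, succ_mem_states hs hi, queryRank_lt_level_succ, ?_⟩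
  rintro ⟨⟨r, q⟩, b⟩ h
  simp only [mem_clause] at h ⊢
  grind

lemma subsumed_insert_true (hs : (j, i, I, o) ∈ states 𝓢 m n) (hi : i ≤ m) :
    Subsumed 𝓢 m n (queryRank (i, j)) (insert ((i, j), true) (clause (j, i, I, o))) := by
  refine .inr ⟨_, succ_mem_states hs hi, queryRank_lt_level_succ, ?_⟩
  rintro ⟨⟨r, q⟩, b⟩ h
  simp only [Finset.mem_insert, mem_clause, Prod.mk.injEq] at h ⊢
  grind

lemma subsumed_insert_false_some (hs : (j, i, I, some p) ∈ states 𝓢 m n) (hi : i ≤ m) :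
    Subsumed 𝓢 m n (queryRank (i, j)) (insert ((i, j), false) (clause (j, i, I, some p))) := by
  obtain ⟨hj, hi', -, hp, hjn, hpi, -⟩ := mem_states.mp hs
  have hpm := hp p rfl
  refine .inl ⟨holeClause j p i, Finset.mem_union_right _ ?_, ?_⟩
  · refine Finset.mem_image.mpr ⟨(p, i, j), ?_, rfl⟩
    simp only [Finset.mem_filter, Finset.mem_product, Finset.mem_Icc]
    omega
  · simp [holeClause, Finset.insert_subset_iff, mem_clause]

/-- The round of the deletion game for hole `j`: the pigeon `i` found there is deleted. -/
lemma subsumed_insert_false_none (hs : (j, i, I, none) ∈ states 𝓢 m n) (hj : j ≤ n)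
    (hi : i ≤ m) (hiI : i ∈ I) :
    Subsumed 𝓢 m n (queryRank (i, j)) (insert ((i, j), false) (clause (j, i, I, none))) := by
  obtain ⟨hj', hi', -, -, hadm⟩ := mem_states.mp hs
  have hround : Survives 𝓢 (n - j + 1) I := by rwa [← Nat.sub_add_comm hj]
  obtain ⟨J, hJ, hJI, hiJ, hsurv⟩ := hround.2 i hiI
  have hnext : (j, i + 1, J, some i) ∈ states 𝓢 m n :=
    mem_states.mpr ⟨hj', by omega, hJ, by rintro _ ⟨⟩; omega, hj, i.lt_succ_self, hiJ, hsurv⟩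
  refine .inr ⟨_, hnext, queryRank_lt_level_succ, ?_⟩
  rintro ⟨⟨r, q⟩, b⟩ h
  simp only [Finset.mem_insert, mem_clause, Prod.mk.injEq] at h ⊢
  have := @hJI r
  grind

variable (h𝓢 : ∀ J ∈ 𝓢, J ⊆ Finset.Icc 1 m)
include h𝓢

lemma subsumed_of_no_hole_left (hs : (j, i, I, none) ∈ states 𝓢 m n) (hj : n < j) :
    Subsumed 𝓢 m n (level (j, i, I, none)) (clause (j, i, I, none)) := by
  obtain ⟨-, -, hI, -, hadm⟩ := mem_states.mp hs
  obtain ⟨p, hp⟩ := Survives.nonempty hadm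
  refine .inl ⟨pigeonClause n p, Finset.mem_union_left _ (Finset.mem_image_of_mem _ (h𝓢 I hI hp)),
    ?_⟩
  simp only [pigeonClause, Finset.subset_iff, Finset.forall_mem_image, Finset.mem_Icc, mem_clause]
  exact fun q hq => .inl ⟨trivial, hp, hq.1, .inl (hq.2.trans_lt hj)⟩

lemma subsumed_next_hole (hs : (j, i, I, o) ∈ states 𝓢 m n) (hj : j ≤ n) (hi : m < i) :
    Subsumed 𝓢 m n (level (j, i, I, o)) (clause (j, i, I, o)) := by
  obtain ⟨hj', -, hI, -, hadm⟩ := mem_states.mp hs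
  have hnext : (j + 1, 1, I, none) ∈ states 𝓢 m n :=
    mem_states.mpr ⟨by omega, by omega, hI, by simp, by
      simpa [IsAdmissible] using hadm.survives⟩
  refine .inr ⟨_, hnext, Prod.Lex.toLex_lt_toLex.mpr (.inl j.lt_succ_self), ?_⟩
  rintro ⟨⟨r, q⟩, b⟩ h
  simp only [mem_clause] at h ⊢
  have := fun hr => Finset.mem_Icc.mp (h𝓢 I hI hr : r ∈ _)
  grind

theorem isOrderedWeakDerivation_states :
    IsOrderedWeakDerivation (WPHPneg m n) queryRank level clause (states 𝓢 m n) := by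
  rintro ⟨j, i, I, o⟩ hs
  obtain ⟨-, -, -, -, hadm⟩ := mem_states.mp hs
  rcases lt_or_ge n j with hj | hj
  · cases o with
    | none => exact .inl (subsumed_of_no_hole_left h𝓢 hs hj)
    | some p => exact absurd hadm.1 hj.not_ge
  rcases lt_or_ge m i with hi | hi
  · exact .inl (subsumed_next_hole h𝓢 hs hj hi)
  by_cases hiI : i ∈ I
  · refine .inr ⟨(i, j), le_rfl, subsumed_insert_true hs hi, ?_⟩
    cases o with
    | none => exact subsumed_insert_false_none hs hj hi hiI
    | some p => exact subsumed_insert_false_some hs hi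
  · exact .inl (subsumed_of_notMem hs hi hiI)

end PigeonState

lemma card_WPHPneg_le (m n : ℕ) : (WPHPneg m n).card ≤ m + m * (m * n) := by
  refine (Finset.card_union_le _ _).trans (add_le_add ?_ ?_)
  · simpa using Finset.card_image_le (s := Finset.Icc 1 m) (f := pigeonClause n)
  · refine (Finset.card_image_le.trans (Finset.card_filter_le _ _)).trans ?_
    simp

theorem exists_regular_of_survives {𝓢 : Finset (Finset ℕ)} {m n : ℕ} {I : Finset ℕ} (hI : I ∈ 𝓢)
    (h𝓢 : ∀ J ∈ 𝓢, J ⊆ Finset.Icc 1 m) (hsurv : Survives 𝓢 n I) :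
    ∃ P : ResolutionProof (WPHPneg m n), P.Regular ∧
      P.size ≤ m + m * (m * n) + (n + 1) * ((m + 1) * (𝓢.card * (m + 1))) := by
  have hstart : (1, 1, I, none) ∈ PigeonState.states 𝓢 m n := by
    simpa [PigeonState.mem_states, PigeonState.IsAdmissible] using ⟨hI, hsurv⟩
  have hempty : PigeonState.clause (1, 1, I, none) = ∅ := by
    refine Finset.eq_empty_of_forall_notMem ?_
    rintro ⟨⟨r, q⟩, b⟩ h
    have hr := fun hr : r ∈ I => Finset.mem_Icc.mp (h𝓢 I hI hr)
    grind [PigeonState.mem_clause]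
  obtain ⟨P, hP, hsize⟩ :=
    (PigeonState.isOrderedWeakDerivation_states h𝓢).exists_regular hstart hempty
  exact ⟨P, hP, hsize.trans (add_le_add (card_WPHPneg_le m n) PigeonState.card_states_le)⟩

end PigeonholeProgram

section Parameters

lemma log_le_two_mul_natLog_mul_log {b m : ℕ} (hb : 1 < b) (hbm : b ≤ m) :
    Real.log m ≤ 2 * Nat.log b m * Real.log b := by
  have hm : (m : ℝ) ≤ b ^ (Nat.log b m + 1) := by exact_mod_cast (Nat.lt_pow_succ_log_self hb m).le
  have hm_pos : (0 : ℝ) < m := by exact_mod_cast (by omega : 0 < m)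
  calc Real.log m ≤ Real.log (b ^ (Nat.log b m + 1)) := Real.log_le_log hm_pos hm
    _ = (Nat.log b m + 1) * Real.log b := by simp
    _ ≤ (Nat.log b m + Nat.log b m) * Real.log b := by
      gcongr
      exact_mod_cast Nat.log_pos hb hbm
    _ = 2 * Nat.log b m * Real.log b := by ring

lemma le_log_mul_log {m n : ℕ} (h : Real.exp (2 * √(n * Real.log n)) < m) :
    n ≤ Nat.log 2 m * Nat.log (Nat.log 2 m + 1) m := by
  have hm : 1 < m := by exact_mod_cast (Real.one_le_exp (by positivity)).trans_lt h
  set b := Nat.log 2 m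
  set D := Nat.log (b + 1) m
  have hb : 1 ≤ b := Nat.log_pos one_lt_two hm
  have hbm : b + 1 ≤ m := Nat.lt_two_pow_self.trans_le (Nat.pow_log_le_self 2 (by omega))
  have hD : 1 ≤ D := Nat.log_pos (by omega) hbm
  by_contra! hlt
  have hbn : b + 1 ≤ n := (Nat.le_mul_of_pos_right b hD).trans_lt hlt
  have log_le_b : Real.log m ≤ 2 * b := by
    refine (log_le_two_mul_natLog_mul_log one_lt_two hm).trans
      (mul_le_of_le_one_right (by positivity) ?_)
    exact_mod_cast Real.log_two_lt_d9.le.trans (by norm_num)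
  have log_le_D : Real.log m ≤ 2 * D * Real.log n := by
    refine (log_le_two_mul_natLog_mul_log (by omega) hbm).trans ?_
    gcongr
  have sqrt_lt_log : 2 * √(n * Real.log n) < Real.log m :=
    (Real.lt_log_iff_exp_lt (by positivity)).mpr h
  refine lt_irrefl (Real.log m ^ 2) ?_
  calc Real.log m ^ 2 ≤ 2 * b * (2 * D * Real.log n) := by
        rw [sq]
        gcongr
    _ = 4 * ((b * D : ℕ) * Real.log n) := by push_cast; ring
    _ ≤ 4 * (n * Real.log n) := by gcongr
    _ = (2 * √(n * Real.log n)) ^ 2 := by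
        rw [mul_pow, Real.sq_sqrt (by positivity)]
        norm_num
    _ < Real.log m ^ 2 := by gcongr

lemma size_le_pow {b D m n s : ℕ} (hm : 2 ≤ m) (hb : 2 ^ b ≤ m) (hD : (b + 1) ^ D ≤ m)
    (hDm : D < m) (hn : n ≤ b * D) (hs : s ≤ (D + 1) * (b + 1) ^ D * 2 ^ (b + 1)) :
    m + m * (m * n) + (n + 1) * ((m + 1) * (s * (m + 1))) ≤ m ^ 11 := by
  have hbm : b < m := Nat.lt_two_pow_self.trans_le hb
  have hsm : s ≤ m ^ 4 := calc
    s ≤ (D + 1) * (b + 1) ^ D * 2 ^ (b + 1) := hs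
    _ = (D + 1) * (b + 1) ^ D * (2 * 2 ^ b) := by rw [pow_succ' 2 b]
    _ ≤ m * m * (m * m) := by gcongr; omega
    _ = m ^ 4 := by ring
  have hnm : n + 1 ≤ m ^ 2 := by nlinarith [Nat.mul_le_mul hbm hDm]
  have hmm : m + 1 ≤ m ^ 2 := by nlinarith
  calc m + m * (m * n) + (n + 1) * ((m + 1) * (s * (m + 1)))
      ≤ m * (m * m ^ 2) + m ^ 2 * (m ^ 2 * (m ^ 4 * m ^ 2)) := by
        gcongr
        nlinarith
    _ = m ^ 4 + m ^ 10 := by ring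
    _ ≤ m ^ 10 + m ^ 10 := by
      gcongr
      · omega
      · norm_num
    _ = 2 * m ^ 10 := by ring
    _ ≤ m * m ^ 10 := by gcongr
    _ = m ^ 11 := by ring

theorem exists_regular_of_le_log_mul_log {m n : ℕ} (hm : 2 ≤ m)
    (hn : n ≤ Nat.log 2 m * Nat.log (Nat.log 2 m + 1) m) :
    ∃ P : ResolutionProof (WPHPneg m n), P.Regular ∧ P.size ≤ m ^ 11 := by
  have hm_ne : m ≠ 0 := by omega
  have hpow : (Nat.log 2 m + 1) ^ Nat.log (Nat.log 2 m + 1) m ≤ m := Nat.pow_log_le_self _ hm_ne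
  obtain ⟨𝓢, hI, h𝓢, hcard, hsurv⟩ :=
    exists_family_survives (Nat.log 2 m) (Nat.log (Nat.log 2 m + 1) m) (Finset.Icc 1 m)
      (by simpa using hpow)
  obtain ⟨P, hP, hsize⟩ :=
    exists_regular_of_survives hI h𝓢 (hsurv.anti (hn.trans_eq (mul_comm _ _)))
  exact ⟨P, hP, hsize.trans (size_le_pow hm (Nat.pow_log_le_self 2 hm_ne) hpow
    (Nat.log_lt_self _ hm_ne) hn hcard)⟩

end Parameters

/-- Buss–Pitassi: there are constants `c > 1` and `k` such that
for every `n ≥ 1` and every `m > c^{√(n·log n)}`, the formula `¬WPHP^m_n` has a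
Regular Resolution refutation of length at most `m^k`. -/
theorem buss_pitassi_wphp_upper_bound :
    ∃ c : ℝ, 1 < c ∧ ∃ k : ℕ, ∀ n : ℕ, 1 ≤ n →
      ∀ m : ℕ, c ^ Real.sqrt ((n : ℝ) * Real.log n) < (m : ℝ) →
        ∃ P : ResolutionProof (WPHPneg m n), P.Regular ∧ P.size ≤ m ^ k := by
  refine ⟨Real.exp 2, Real.one_lt_exp_iff.mpr two_pos, 11, fun n _ m hm => ?_⟩
  rw [← Real.exp_mul] at hm
  have hm_two : 1 < m := by exact_mod_cast (Real.one_le_exp (by positivity)).trans_lt hm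
  exact exists_regular_of_le_log_mul_log hm_two (le_log_mul_log hm)
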